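/- Abstract short-time solvability of the Cahn–Hilliard equation (the functional-analytic content of Corollaries 5.2 and 5.3): Assume V, W, J, S are as in the context, assume in addition that V is a normed ring whose norm is submultiplicative (‖uv‖_V ≤ ‖u‖_V ‖v‖_V), and let L : V → W be a bounded linear map (playing the role of the Laplacian Δ : C^{2(k+1)}_ie → C^{2k}_ie). Then for every u₀ ∈ V there exists T ∈ (0,1] such that there is exactly one continuous u : [0,T] → V with u(0) = u₀ and u(t) = S(t)(J u₀) − ∫₀ᵗ S(t−s)(L(u(s) − u(s)³)) ds for all t ∈ (0,T]; this is the mild formulation of ∂ₜu + Δ²u + Δ(u − u³) = 0. -/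

import Mathlib

/-!
The solution is a fixed point of `u ↦ S(·)(J u₀) − ∫₀^· S(· − s)(L(u − u³)) ds`. The kernel bound
`‖S(r)‖ ≤ C r^{−γ}` with `γ < 1` is integrable at `0`, so the convolution of `S` with a continuous
bounded `W`-valued function is continuous by dominated convergence (`continuous_convolution`) and
its norm is of order `T^{1−γ}` (`norm_convolution_le`). Since `u ↦ u − u³` is bounded and Lipschitz
on balls, the map is a contraction of a closed ball of `C([0,T], V)` for small `T`.

Uniqueness concerns arbitrary continuous solutions, not only those in that ball. The difference of
two solutions satisfies `d(t) ≤ K ∫₀ᵗ (t−s)^{−γ} d(s) ds`, and looking at a maximum point of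
`e^{−λt} d(t)` with `λ` so large that `K ∫₀^∞ r^{−γ} e^{−λr} dr < 1` forces `d = 0`
(`eq_zero_of_singular_gronwall`).
-/

open MeasureTheory Set Filter

/-- A mild solution of the abstract Cahn–Hilliard equation
`∂ₜu + Δ²u + Δ(u − u³) = 0` on `[0, T]` with initial value `u₀`:
a continuous `u : [0,T] → V` with `u 0 = u₀` and
`u t = S t (J u₀) − ∫₀ᵗ S (t - s) (L (u s − (u s)³)) ds` for all `t ∈ (0, T]`. -/
def IsCahnHilliardMildSolution {V W : Type*} [NormedRing V] [NormedSpace ℝ V]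
    [NormedAddCommGroup W] [NormedSpace ℝ W]
    (S : ℝ → (W →L[ℝ] V)) (J : V →L[ℝ] W) (L : V →L[ℝ] W) (u₀ : V) (T : ℝ)
    (u : ℝ → V) : Prop :=
  ContinuousOn u (Set.Icc 0 T) ∧ u 0 = u₀ ∧
    ∀ t ∈ Set.Ioc (0 : ℝ) T,
      u t = S t (J u₀) - ∫ s in (0 : ℝ)..t, S (t - s) (L (u s - (u s) ^ 3))

open Topology

/-! ### Convolution with the weakly singular kernel -/

section Kernel

variable {V W : Type*} [NormedAddCommGroup V] [NormedSpace ℝ V]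
  [NormedAddCommGroup W] [NormedSpace ℝ W]

lemma continuousOn_kernel_apply {S : ℝ → (W →L[ℝ] V)} {C γ : ℝ}
    (hS3 : ∀ w : W, ∀ t : ℝ, 0 < t → t ≤ 1 → ‖S t w‖ ≤ C * t ^ (-γ) * ‖w‖)
    (hS4 : ∀ w : W, ContinuousOn (fun t => S t w) (Set.Ioi 0))
    {h : ℝ → W} (hh : Continuous h) :
    ContinuousOn (fun r => S r (h r)) (Set.Ioc 0 1) := by
  intro r₀ hr₀
  have h1 : Tendsto (fun r => S r (h r₀)) (𝓝[Ioc 0 1] r₀) (𝓝 (S r₀ (h r₀))) :=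
    ((hS4 (h r₀)) r₀ hr₀.1).mono_left (nhdsWithin_mono _ fun x hx => hx.1)
  have h2 : Tendsto (fun r => S r (h r - h r₀)) (𝓝[Ioc 0 1] r₀) (𝓝 0) := by
    have h3 : Tendsto (fun r : ℝ => C * r ^ (-γ) * ‖h r - h r₀‖) (𝓝[Ioc 0 1] r₀) (𝓝 0) := by
      have h4 : ContinuousAt (fun r : ℝ => C * r ^ (-γ) * ‖h r - h r₀‖) r₀ :=
        ((continuousAt_const.mul
          (Real.continuousAt_rpow_const r₀ (-γ) (Or.inl hr₀.1.ne'))).mul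
          (hh.continuousAt.sub continuousAt_const).norm)
      have h5 := h4.tendsto
      simp only [sub_self, norm_zero, mul_zero] at h5
      exact h5.mono_left nhdsWithin_le_nhds
    refine squeeze_zero_norm' ?_ h3
    filter_upwards [self_mem_nhdsWithin] with r hr
    exact hS3 _ r hr.1 hr.2
  have h6 := h2.add h1
  simp only [← map_add, sub_add_cancel, zero_add] at h6
  exact h6

lemma intervalIntegrable_singular {γ : ℝ} (hγ : γ < 1) (t : ℝ) :
    IntervalIntegrable (fun s : ℝ => (t - s) ^ (-γ)) volume 0 t := by
  have h : IntervalIntegrable (fun s : ℝ => s ^ (-γ)) volume 0 t :=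
    intervalIntegral.intervalIntegrable_rpow' (by linarith)
  simpa using (h.comp_sub_left t).symm

lemma integral_singular {γ : ℝ} (hγ : γ < 1) (t : ℝ) :
    ∫ s in (0 : ℝ)..t, (t - s) ^ (-γ) = t ^ (1 - γ) / (1 - γ) := by
  rw [intervalIntegral.integral_comp_sub_left (fun s : ℝ => s ^ (-γ)) t]
  rw [sub_self, sub_zero, integral_rpow (Or.inl (by linarith))]
  rw [Real.zero_rpow (by linarith), sub_zero, neg_add_eq_sub]

lemma intervalIntegrable_convolution {S : ℝ → (W →L[ℝ] V)} {C γ : ℝ} (hγ : γ < 1)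
    (hS3 : ∀ w : W, ∀ t : ℝ, 0 < t → t ≤ 1 → ‖S t w‖ ≤ C * t ^ (-γ) * ‖w‖)
    (hS4 : ∀ w : W, ContinuousOn (fun t => S t w) (Set.Ioi 0))
    (hC : 0 < C) {F : ℝ → W} (hF : Continuous F) {B : ℝ} (hB : ∀ s, ‖F s‖ ≤ B)
    {t : ℝ} (ht : t ∈ Icc (0 : ℝ) 1) :
    IntervalIntegrable (fun s => S (t - s) (F s)) volume 0 t := by
  have key : IntervalIntegrable (fun r => S r (F (t - r))) volume 0 t := by
    have hg : IntervalIntegrable (fun s : ℝ => C * s ^ (-γ) * B) volume 0 t :=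
      ((intervalIntegral.intervalIntegrable_rpow' (by linarith)).const_mul C).mul_const B
    rw [intervalIntegrable_iff_integrableOn_Ioc_of_le ht.1] at hg ⊢
    refine Integrable.mono' hg ?_ ?_
    · refine ContinuousOn.aestronglyMeasurable ?_ measurableSet_Ioc
      exact (continuousOn_kernel_apply hS3 hS4 (hF.comp (continuous_const.sub continuous_id))).mono
        (Ioc_subset_Ioc_right ht.2)
    · filter_upwards [ae_restrict_mem measurableSet_Ioc] with r hr
      refine (hS3 _ r hr.1 (hr.2.trans ht.2)).trans ?_
      have := Real.rpow_nonneg hr.1.le (-γ)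
      gcongr
      exact hB _
  simpa using (key.comp_sub_left t).symm

/-- The convolution `∫₀ᵗ S(t−s) F(s) ds` is rewritten as an integral over the fixed interval
`(0,1]`, with an integrand that is continuous in `t` off the null set `r = t` and is dominated by
a multiple of `r^{−γ}`. -/
lemma continuous_convolution {S : ℝ → (W →L[ℝ] V)} {C γ : ℝ} (hγ : γ < 1)
    (hS3 : ∀ w : W, ∀ t : ℝ, 0 < t → t ≤ 1 → ‖S t w‖ ≤ C * t ^ (-γ) * ‖w‖)
    (hS4 : ∀ w : W, ContinuousOn (fun t => S t w) (Set.Ioi 0))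
    (hC : 0 < C) {F : ℝ → W} (hF : Continuous F) {B : ℝ} (hB : ∀ s, ‖F s‖ ≤ B) :
    ContinuousOn (fun t => ∫ s in (0 : ℝ)..t, S (t - s) (F s)) (Icc 0 1) := by
  have hB0 : 0 ≤ B := (norm_nonneg _).trans (hB 0)
  have hcont : Continuous (fun t : ℝ => ∫ r in Ioc (0 : ℝ) 1,
      (Iic t).indicator (fun r => S r (F (t - r))) r) := by
    rw [continuous_iff_continuousAt]
    intro t₀
    refine continuousAt_of_dominated (bound := fun r : ℝ => C * r ^ (-γ) * B) ?_ ?_ ?_ ?_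
    · refine Eventually.of_forall fun t => ?_
      refine AEStronglyMeasurable.indicator ?_ measurableSet_Iic
      refine ContinuousOn.aestronglyMeasurable ?_ measurableSet_Ioc
      exact continuousOn_kernel_apply hS3 hS4 (hF.comp (continuous_const.sub continuous_id))
    · refine Eventually.of_forall fun t => ?_
      filter_upwards [ae_restrict_mem measurableSet_Ioc] with r hr
      refine (norm_indicator_le_norm_self _ _).trans ?_
      refine (hS3 _ r hr.1 hr.2).trans ?_
      have := Real.rpow_nonneg hr.1.le (-γ)
      gcongr
      exact hB _
    · have hg : IntervalIntegrable (fun s : ℝ => C * s ^ (-γ) * B) volume 0 1 :=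
        ((intervalIntegral.intervalIntegrable_rpow' (by linarith)).const_mul C).mul_const B
      rwa [intervalIntegrable_iff_integrableOn_Ioc_of_le zero_le_one] at hg
    · have hne : ∀ᵐ r ∂(volume.restrict (Ioc (0 : ℝ) 1)), r ≠ t₀ :=
        ae_restrict_of_ae (Measure.ae_ne volume t₀)
      filter_upwards [hne] with r hr
      rcases lt_or_gt_of_ne hr with h | h
      · have h1 : ContinuousAt (fun t => S r (F (t - r))) t₀ :=
          ((S r).continuous.comp (hF.comp (continuous_id.sub continuous_const))).continuousAt
        refine h1.congr ?_
        filter_upwards [lt_mem_nhds h] with t ht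
        rw [indicator_of_mem (show r ∈ Iic t from le_of_lt ht)]
      · have h1 : ContinuousAt (fun _ : ℝ => (0 : V)) t₀ := continuousAt_const
        refine h1.congr ?_
        filter_upwards [gt_mem_nhds h] with t ht
        rw [indicator_of_notMem (show r ∉ Iic t from not_le.2 ht)]
  refine hcont.continuousOn.congr fun t ht => ?_
  have h1 := intervalIntegral.integral_comp_sub_left (a := 0) (b := t)
    (fun r => S r (F (t - r))) t
  simp only [sub_sub_cancel, sub_self, sub_zero] at h1
  simp only
  rw [h1, intervalIntegral.integral_of_le ht.1, setIntegral_indicator measurableSet_Iic,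
    Ioc_inter_Iic, min_eq_right ht.2]

/-- The integrability of the kernel bound makes the convolution of order `t^{1−γ}`. -/
lemma norm_convolution_le {S : ℝ → (W →L[ℝ] V)} {C γ : ℝ} (hγ : γ < 1)
    (hS3 : ∀ w : W, ∀ t : ℝ, 0 < t → t ≤ 1 → ‖S t w‖ ≤ C * t ^ (-γ) * ‖w‖)
    (hC : 0 < C) {F : ℝ → W} {B : ℝ} (hB : ∀ s, ‖F s‖ ≤ B)
    {t : ℝ} (ht : t ∈ Icc (0 : ℝ) 1) :
    ‖∫ s in (0 : ℝ)..t, S (t - s) (F s)‖ ≤ C * B * (t ^ (1 - γ) / (1 - γ)) := by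
  rw [← integral_singular hγ t, ← intervalIntegral.integral_const_mul]
  refine intervalIntegral.norm_integral_le_of_norm_le ht.1 ?_
    ((intervalIntegrable_singular hγ t).const_mul _)
  filter_upwards [Measure.ae_ne volume t] with s hst hs
  have hlt : s < t := lt_of_le_of_ne hs.2 hst
  refine (hS3 _ (t - s) (by linarith) (by linarith [hs.1, ht.2])).trans ?_
  have := Real.rpow_nonneg (sub_pos.2 hlt).le (-γ)
  calc C * (t - s) ^ (-γ) * ‖F s‖ ≤ C * (t - s) ^ (-γ) * B := by gcongr; exact hB s
    _ = C * B * (t - s) ^ (-γ) := by ring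

end Kernel

/-! ### Singular Gronwall lemma -/

/-- A Gronwall lemma for the weakly singular kernel `(t−s)^{−γ}`, proved by an exponential
weight. -/
lemma eq_zero_of_singular_gronwall {γ K T : ℝ} (hγ : γ < 1) (hK : 0 ≤ K)
    {d : ℝ → ℝ} (hd : ContinuousOn d (Icc 0 T)) (hd0 : ∀ t ∈ Icc 0 T, 0 ≤ d t)
    (h : ∀ t ∈ Icc 0 T, d t ≤ K * ∫ s in (0 : ℝ)..t, (t - s) ^ (-γ) * d s) :
    ∀ t ∈ Icc 0 T, d t = 0 := by
  intro t₁ ht₁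
  have hlim : Tendsto (fun l : ℝ => K * ((1 / l) ^ (1 - γ) * Real.Gamma (1 - γ))) atTop (𝓝 0) := by
    have h1 : Tendsto (fun l : ℝ => (1 / l) ^ (1 - γ)) atTop (𝓝 0) := by
      have h2 : Tendsto (fun l : ℝ => l ^ (-(1 - γ))) atTop (𝓝 0) :=
        tendsto_rpow_neg_atTop (by linarith)
      refine h2.congr' ?_
      filter_upwards [eventually_gt_atTop 0] with l hl
      rw [one_div, Real.inv_rpow hl.le, Real.rpow_neg hl.le]
    simpa using (h1.mul_const (Real.Gamma (1 - γ))).const_mul K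
  obtain ⟨l, hl1, hl0⟩ :=
    ((hlim.eventually (gt_mem_nhds (show (0 : ℝ) < 1 by norm_num))).and
      (eventually_gt_atTop 0)).exists
  have hw : ContinuousOn (fun t => Real.exp (-(l * t)) * d t) (Icc 0 T) :=
    ContinuousOn.mul (by fun_prop) hd
  obtain ⟨t₀, ht₀, hmax⟩ := isCompact_Icc.exists_isMaxOn ⟨t₁, ht₁⟩ hw
  set m := Real.exp (-(l * t₀)) * d t₀ with hm
  have hm0 : 0 ≤ m := mul_nonneg (Real.exp_pos _).le (hd0 _ ht₀)
  have hle : ∀ s ∈ Icc 0 T, d s ≤ Real.exp (l * s) * m := by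
    intro s hs
    have h1 : Real.exp (-(l * s)) * d s ≤ m := hmax hs
    calc d s = Real.exp (l * s) * (Real.exp (-(l * s)) * d s) := by
          rw [← mul_assoc, ← Real.exp_add]; simp
      _ ≤ _ := by gcongr
  have hGammaInt : IntegrableOn (fun r : ℝ => r ^ (1 - γ - 1) * Real.exp (-(l * r))) (Ioi 0) := by
    have := integrableOn_rpow_mul_exp_neg_mul_rpow (s := 1 - γ - 1) (p := 1) (b := l)
      (by linarith) one_pos hl0
    simpa using this
  have hgam : ∫ r in (0 : ℝ)..t₀, r ^ (-γ) * Real.exp (-(l * r)) ≤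
      (1 / l) ^ (1 - γ) * Real.Gamma (1 - γ) := by
    rw [← Real.integral_rpow_mul_exp_neg_mul_Ioi (by linarith) hl0,
      intervalIntegral.integral_of_le ht₀.1, show -γ = 1 - γ - 1 by ring]
    refine setIntegral_mono_set hGammaInt ?_ (LE.le.eventuallyLE Ioc_subset_Ioi_self)
    filter_upwards [ae_restrict_mem measurableSet_Ioi] with r hr
    have := Real.rpow_nonneg (le_of_lt hr) (1 - γ - 1)
    positivity
  have hconv : ∫ s in (0 : ℝ)..t₀, (t₀ - s) ^ (-γ) * d s ≤
      Real.exp (l * t₀) * m * ∫ r in (0 : ℝ)..t₀, r ^ (-γ) * Real.exp (-(l * r)) := by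
    have h1 := intervalIntegral.integral_comp_sub_left (a := 0) (b := t₀)
      (fun r : ℝ => r ^ (-γ) * Real.exp (-(l * r))) t₀
    simp only [sub_self, sub_zero] at h1
    rw [← h1, ← intervalIntegral.integral_const_mul]
    have hci : ∀ f : ℝ → ℝ, ContinuousOn f (Icc 0 t₀) →
        IntervalIntegrable (fun s => (t₀ - s) ^ (-γ) * f s) volume 0 t₀ := fun f hf =>
      (intervalIntegrable_singular hγ t₀).mul_continuousOn (by rwa [uIcc_of_le ht₀.1])
    refine intervalIntegral.integral_mono_on ht₀.1
      (hci d (hd.mono (Icc_subset_Icc_right ht₀.2)))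
      ((hci (fun s => Real.exp (-(l * (t₀ - s)))) (by fun_prop)).const_mul _) ?_
    intro s hs
    have h2 := hle s ⟨hs.1, hs.2.trans ht₀.2⟩
    have h3 := Real.rpow_nonneg (sub_nonneg.2 hs.2) (-γ)
    calc (t₀ - s) ^ (-γ) * d s ≤ (t₀ - s) ^ (-γ) * (Real.exp (l * s) * m) := by gcongr
      _ = Real.exp (l * t₀) * m * ((t₀ - s) ^ (-γ) * Real.exp (-(l * (t₀ - s)))) := by
        rw [show l * s = l * t₀ + -(l * (t₀ - s)) by ring, Real.exp_add]; ring
  have hmm : m ≤ K * ((1 / l) ^ (1 - γ) * Real.Gamma (1 - γ)) * m := by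
    calc m ≤ Real.exp (-(l * t₀)) * (K * (Real.exp (l * t₀) * m *
          ((1 / l) ^ (1 - γ) * Real.Gamma (1 - γ)))) := by
          rw [hm]
          gcongr
          refine (h t₀ ht₀).trans ?_
          gcongr
          refine hconv.trans ?_
          gcongr
      _ = (Real.exp (-(l * t₀)) * Real.exp (l * t₀)) *
          (K * ((1 / l) ^ (1 - γ) * Real.Gamma (1 - γ)) * m) := by ring
      _ = _ := by rw [← Real.exp_add]; simp
  have hmz : m = 0 := by nlinarith
  have := hle t₁ ht₁
  rw [hmz, mul_zero] at this
  exact le_antisymm this (hd0 _ ht₁)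

/-! ### The cubic nonlinearity on balls -/

section Nonlinearity

variable {V : Type*} [NormedRing V]

lemma norm_sub_cube_le {M : ℝ} {x : V} (hx : ‖x‖ ≤ M) : ‖x - x ^ 3‖ ≤ M + M ^ 3 := by
  refine (norm_sub_le _ _).trans ?_
  have := norm_pow_le' x (n := 3) (by norm_num)
  have h2 : ‖x‖ ^ 3 ≤ M ^ 3 := by gcongr
  linarith

lemma norm_sub_cube_sub_le {M : ℝ} {x y : V} (hx : ‖x‖ ≤ M) (hy : ‖y‖ ≤ M) :
    ‖(x - x ^ 3) - (y - y ^ 3)‖ ≤ (1 + 3 * M ^ 2) * ‖x - y‖ := by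
  have hM : 0 ≤ M := (norm_nonneg _).trans hx
  have h0 : (x - x ^ 3) - (y - y ^ 3) =
      (x - y) - (x * x * (x - y) + x * (x - y) * y + (x - y) * y * y) := by noncomm_ring
  have h1 : ‖x * x * (x - y)‖ ≤ M * M * ‖x - y‖ := by
    refine (norm_mul₃_le).trans ?_
    gcongr
  have h2 : ‖x * (x - y) * y‖ ≤ M * ‖x - y‖ * M := by
    refine (norm_mul₃_le).trans ?_
    gcongr
  have h3 : ‖(x - y) * y * y‖ ≤ ‖x - y‖ * M * M := by
    refine (norm_mul₃_le).trans ?_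
    gcongr
  rw [h0]
  refine (norm_sub_le _ _).trans ?_
  have h4 := norm_add₃_le (a := x * x * (x - y)) (b := x * (x - y) * y) (c := (x - y) * y * y)
  nlinarith

end Nonlinearity

/-! ### Uniqueness and existence of mild solutions -/

section Solve

variable {V W : Type*} [NormedRing V] [NormedSpace ℝ V]
  [NormedAddCommGroup W] [NormedSpace ℝ W]

/-- Uniqueness holds on every interval inside `[0,1]`, with no smallness of `T`. -/
lemma mild_solution_unique {S : ℝ → (W →L[ℝ] V)} {J L : V →L[ℝ] W} {C γ T : ℝ} {u₀ : V}
    (hγ : γ < 1)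
    (hS3 : ∀ w : W, ∀ t : ℝ, 0 < t → t ≤ 1 → ‖S t w‖ ≤ C * t ^ (-γ) * ‖w‖)
    (hS4 : ∀ w : W, ContinuousOn (fun t => S t w) (Set.Ioi 0))
    (hC : 0 < C) (hT0 : 0 < T) (hT1 : T ≤ 1) {u v : ℝ → V}
    (hu : IsCahnHilliardMildSolution S J L u₀ T u)
    (hv : IsCahnHilliardMildSolution S J L u₀ T v) : EqOn u v (Icc 0 T) := by
  obtain ⟨huc, hu0, hue⟩ := hu
  obtain ⟨hvc, hv0, hve⟩ := hv
  obtain ⟨M₁, hM₁⟩ := isCompact_Icc.exists_bound_of_continuousOn huc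
  obtain ⟨M₂, hM₂⟩ := isCompact_Icc.exists_bound_of_continuousOn hvc
  set M := max M₁ M₂
  have hMu : ∀ s ∈ Icc 0 T, ‖u s‖ ≤ M := fun s hs => (hM₁ s hs).trans (le_max_left _ _)
  have hMv : ∀ s ∈ Icc 0 T, ‖v s‖ ≤ M := fun s hs => (hM₂ s hs).trans (le_max_right _ _)
  -- Continuous extension by boundary values makes `intervalIntegrable_convolution` applicable.
  have hext : ∀ w : ℝ → V, ContinuousOn w (Icc 0 T) → (∀ s ∈ Icc 0 T, ‖w s‖ ≤ M) →
      ∀ t ∈ Ioc 0 T,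
      IntervalIntegrable (fun s => S (t - s) (L (w s - w s ^ 3))) volume 0 t := by
    intro w hw hMw t ht
    have hwc : Continuous (fun s => w (projIcc 0 T hT0.le s)) :=
      hw.comp_continuous (continuous_subtype_val.comp continuous_projIcc)
        fun s => (projIcc 0 T hT0.le s).2
    have h1 := intervalIntegrable_convolution hγ hS3 hS4 hC
      (F := fun s => L (w (projIcc 0 T hT0.le s) - w (projIcc 0 T hT0.le s) ^ 3))
      (L.continuous.comp (hwc.sub (hwc.pow 3))) (B := ‖L‖ * (M + M ^ 3))
      (fun s => L.le_opNorm_of_le (norm_sub_cube_le (hMw _ (projIcc 0 T hT0.le s).2)))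
      (t := t) ⟨ht.1.le, ht.2.trans hT1⟩
    refine h1.congr fun s hs => ?_
    rw [uIoc_of_le ht.1.le] at hs
    have : (projIcc 0 T hT0.le s : ℝ) = s := by
      rw [projIcc_of_mem hT0.le ⟨hs.1.le, hs.2.trans ht.2⟩]
    simp only [this]
  have key := eq_zero_of_singular_gronwall (T := T) hγ (K := C * (‖L‖ * (1 + 3 * M ^ 2)))
    (by positivity) (d := fun t => ‖u t - v t‖) (huc.sub hvc).norm
    (fun _ _ => norm_nonneg _) ?_
  · intro t ht
    exact sub_eq_zero.1 (norm_eq_zero.1 (key t ht))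
  intro t ht
  rcases ht.1.eq_or_lt with h0 | h0
  · simp [← h0, hu0, hv0]
  have ht' : t ∈ Ioc 0 T := ⟨h0, ht.2⟩
  have hdiff : u t - v t = -∫ s in (0 : ℝ)..t,
      (S (t - s) (L (u s - u s ^ 3)) - S (t - s) (L (v s - v s ^ 3))) := by
    rw [intervalIntegral.integral_sub (hext u huc hMu t ht') (hext v hvc hMv t ht'),
      hue t ht', hve t ht']
    abel
  rw [hdiff, norm_neg, ← intervalIntegral.integral_const_mul]
  refine intervalIntegral.norm_integral_le_of_norm_le h0.le ?_ ?_
  · filter_upwards [Measure.ae_ne volume t] with s hst hs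
    have hlt : s < t := lt_of_le_of_ne hs.2 hst
    have hsT : s ∈ Icc 0 T := ⟨hs.1.le, hs.2.trans ht.2⟩
    rw [← map_sub, ← map_sub]
    refine (hS3 _ (t - s) (by linarith) (by linarith [hs.1, ht.2])).trans ?_
    have h1 := Real.rpow_nonneg (sub_pos.2 hlt).le (-γ)
    have h2 := L.le_opNorm_of_le (norm_sub_cube_sub_le (hMu s hsT) (hMv s hsT))
    calc _ ≤ C * (t - s) ^ (-γ) * (‖L‖ * ((1 + 3 * M ^ 2) * ‖u s - v s‖)) := by gcongr
      _ = _ := by ring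
  · refine IntervalIntegrable.const_mul ?_ _
    refine (intervalIntegrable_singular hγ t).mul_continuousOn ?_
    rw [uIcc_of_le h0.le]
    exact (huc.sub hvc).norm.mono (Icc_subset_Icc_right ht.2)

/-- Existence by Banach's fixed point theorem in the ball of radius `M` of `C([0,T], V)`.
The free evolution enters only as a continuous function `g` whose norm on `[0,1]` is at most
`M − 1`; the smallness condition on `T` gives both the self-map property and the contraction
factor `1/2`. -/
lemma exists_mild_solution [CompleteSpace V] {S : ℝ → (W →L[ℝ] V)} {L : V →L[ℝ] W}
    {C γ T M : ℝ} (hγ : γ < 1)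
    (hS3 : ∀ w : W, ∀ t : ℝ, 0 < t → t ≤ 1 → ‖S t w‖ ≤ C * t ^ (-γ) * ‖w‖)
    (hS4 : ∀ w : W, ContinuousOn (fun t => S t w) (Set.Ioi 0))
    (hC : 0 < C) (hT0 : 0 < T) (hT1 : T ≤ 1) {g : ℝ → V} (hg : Continuous g)
    (hgM : ∀ t ∈ Icc (0 : ℝ) 1, ‖g t‖ + 1 ≤ M)
    (hT : C * (‖L‖ * (M + M ^ 3 + (1 + 3 * M ^ 2))) * (T ^ (1 - γ) / (1 - γ)) ≤ 1 / 2) :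
    ∃ u : ℝ → V, ContinuousOn u (Icc 0 T) ∧ ∀ t ∈ Icc (0 : ℝ) T,
      u t = g t - ∫ s in (0 : ℝ)..t, S (t - s) (L (u s - (u s) ^ 3)) := by
  have hM : 0 ≤ M := by
    have := hgM 0 (by simp)
    linarith [norm_nonneg (g 0)]
  -- The source term of `u`, extended to the whole line by boundary values.
  let F : C(Icc (0 : ℝ) T, V) → ℝ → W := fun u s =>
    L (u (projIcc 0 T hT0.le s) - u (projIcc 0 T hT0.le s) ^ 3)
  have hFc : ∀ u, Continuous (F u) := fun u => by
    have h : Continuous (fun s => u (projIcc 0 T hT0.le s)) := u.continuous.comp continuous_projIcc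
    exact L.continuous.comp (h.sub (h.pow 3))
  have hFb' : ∀ (u : C(Icc (0 : ℝ) T, V)) (R : ℝ), ‖u‖ ≤ R → ∀ s, ‖F u s‖ ≤ ‖L‖ * (R + R ^ 3) :=
    fun u R hR s => L.le_opNorm_of_le (norm_sub_cube_le ((u.norm_coe_le_norm _).trans hR))
  have hmem : ∀ t : Icc (0 : ℝ) T, (t : ℝ) ∈ Icc (0 : ℝ) 1 := fun t => ⟨t.2.1, t.2.2.trans hT1⟩
  let Φ : C(Icc (0 : ℝ) T, V) → C(Icc (0 : ℝ) T, V) := fun u =>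
    ⟨fun t => g t - ∫ s in (0 : ℝ)..t, S (t - s) (F u s),
      (hg.comp continuous_subtype_val).sub
        ((continuous_convolution hγ hS3 hS4 hC (hFc u) (hFb' u _ le_rfl)).comp_continuous
          continuous_subtype_val hmem)⟩
  have hΦ : ∀ u t, Φ u t = g t - ∫ s in (0 : ℝ)..t, S (t - s) (F u s) := fun u t => rfl
  have hTt : ∀ t : Icc (0 : ℝ) T, (t : ℝ) ^ (1 - γ) / (1 - γ) ≤ T ^ (1 - γ) / (1 - γ) := by
    intro t
    have h1 : 0 < 1 - γ := by linarith
    have := Real.rpow_le_rpow t.2.1 t.2.2 h1.le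
    gcongr
  have hTn : 0 ≤ T ^ (1 - γ) / (1 - γ) :=
    div_nonneg (Real.rpow_nonneg hT0.le _) (by linarith)
  have hmaps : MapsTo Φ (Metric.closedBall 0 M) (Metric.closedBall 0 M) := by
    intro u hu
    rw [mem_closedBall_zero_iff] at hu ⊢
    rw [ContinuousMap.norm_le _ hM]
    intro t
    have h1 := norm_convolution_le hγ hS3 hC (hFb' u M hu) (hmem t)
    have h2 : C * (‖L‖ * (M + M ^ 3)) * ((t : ℝ) ^ (1 - γ) / (1 - γ)) ≤ 1 / 2 := by
      refine le_trans ?_ hT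
      refine mul_le_mul ?_ (hTt t) (div_nonneg (Real.rpow_nonneg t.2.1 _) (by linarith))
        (by positivity)
      refine mul_le_mul_of_nonneg_left (mul_le_mul_of_nonneg_left ?_ (norm_nonneg _)) hC.le
      nlinarith
    rw [hΦ]
    have h3 := hgM t (hmem t)
    refine (norm_sub_le _ _).trans ?_
    linarith
  have hcontr : ContractingWith (1 / 2) (hmaps.restrict Φ _ _) := by
    refine ⟨by rw [← NNReal.coe_lt_coe]; norm_num, LipschitzWith.of_dist_le_mul ?_⟩
    rintro ⟨u, hu⟩ ⟨v, hv⟩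
    rw [mem_closedBall_zero_iff] at hu hv
    change dist (Φ u) (Φ v) ≤ _ * dist u v
    rw [ContinuousMap.dist_le (by positivity)]
    intro t
    have hLip : ∀ s, ‖F u s - F v s‖ ≤ ‖L‖ * ((1 + 3 * M ^ 2) * dist u v) := by
      intro s
      simp only [F]
      rw [← map_sub]
      refine L.le_opNorm_of_le ((norm_sub_cube_sub_le ((u.norm_coe_le_norm _).trans hu)
        ((v.norm_coe_le_norm _).trans hv)).trans ?_)
      have := ContinuousMap.dist_apply_le_dist (f := u) (g := v) (projIcc 0 T hT0.le s)
      rw [dist_eq_norm] at this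
      gcongr
    have h1 := norm_convolution_le hγ hS3 hC hLip (hmem t)
    have h2 : Φ u t - Φ v t = -∫ s in (0 : ℝ)..t, S (t - s) (F u s - F v s) := by
      simp only [map_sub]
      rw [intervalIntegral.integral_sub
        (intervalIntegrable_convolution hγ hS3 hS4 hC (hFc u) (hFb' u M hu) (hmem t))
        (intervalIntegrable_convolution hγ hS3 hS4 hC (hFc v) (hFb' v M hv) (hmem t)), hΦ, hΦ]
      abel
    rw [dist_eq_norm, h2, norm_neg]
    refine h1.trans ?_
    have h3 : C * (‖L‖ * (1 + 3 * M ^ 2)) * ((t : ℝ) ^ (1 - γ) / (1 - γ)) ≤ 1 / 2 := by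
      refine le_trans ?_ hT
      refine mul_le_mul ?_ (hTt t) (div_nonneg (Real.rpow_nonneg t.2.1 _) (by linarith))
        (by positivity)
      refine mul_le_mul_of_nonneg_left (mul_le_mul_of_nonneg_left ?_ (norm_nonneg _)) hC.le
      nlinarith [pow_nonneg hM 3]
    calc _ = C * (‖L‖ * (1 + 3 * M ^ 2)) * ((t : ℝ) ^ (1 - γ) / (1 - γ)) * dist u v := by ring
      _ ≤ 1 / 2 * dist u v := by gcongr
      _ = _ := by norm_num
  obtain ⟨u, -, hfix, -⟩ := ContractingWith.exists_fixedPoint'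
    (Metric.isClosed_closedBall.isComplete) hmaps hcontr
    (x := 0) (Metric.mem_closedBall_self hM) (edist_ne_top _ _)
  refine ⟨fun s => u (projIcc 0 T hT0.le s),
    (u.continuous.comp continuous_projIcc).continuousOn, fun t ht => ?_⟩
  have h1 : Φ u ⟨t, ht⟩ = u ⟨t, ht⟩ := by rw [hfix]
  simp only [projIcc_of_mem hT0.le ht]
  rw [← h1, hΦ]

end Solve

/-- Abstract short-time solvability of the Cahn–Hilliard equation (the
functional-analytic content of Corollaries 5.2 and 5.3). -/
theorem cahn_hilliard_short_time
    {V W : Type*} [NormedRing V] [NormedSpace ℝ V] [CompleteSpace V]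
    [NormedAddCommGroup W] [NormedSpace ℝ W] [CompleteSpace W]
    (hsubmul : ∀ u v : V, ‖u * v‖ ≤ ‖u‖ * ‖v‖)
    (J : V →L[ℝ] W) (S : ℝ → (W →L[ℝ] V)) (C γ : ℝ)
    (hC : 0 < C) (hγ : γ ∈ Set.Ico (0 : ℝ) 1)
    (hS1 : ∀ s t : ℝ, 0 < s → 0 < t → S (t + s) = (S t).comp (J.comp (S s)))
    (hS2 : ∀ v : V, ContinuousOn (fun t => S t (J v)) (Set.Ioi 0) ∧
      Filter.Tendsto (fun t => S t (J v)) (nhdsWithin 0 (Set.Ioi 0)) (nhds v))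
    (hS3 : ∀ w : W, ∀ t : ℝ, 0 < t → t ≤ 1 → ‖S t w‖ ≤ C * t ^ (-γ) * ‖w‖)
    (hS4 : ∀ w : W, ContinuousOn (fun t => S t w) (Set.Ioi 0))
    (L : V →L[ℝ] W) (u₀ : V) :
    ∃ T : ℝ, 0 < T ∧ T ≤ 1 ∧
      (∃ u : ℝ → V, IsCahnHilliardMildSolution S J L u₀ T u) ∧
      (∀ u v : ℝ → V, IsCahnHilliardMildSolution S J L u₀ T u →
        IsCahnHilliardMildSolution S J L u₀ T v → Set.EqOn u v (Set.Icc 0 T)) := by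
  have hγ1 : γ < 1 := hγ.2
  -- The free evolution, extended by `u₀` to nonpositive times.
  let g : ℝ → V := fun t => if t ≤ 0 then u₀ else S t (J u₀)
  have hgpos : ∀ t, 0 < t → g t = S t (J u₀) := fun t ht => if_neg (not_le.2 ht)
  have hg0 : g 0 = u₀ := if_pos le_rfl
  have hg : Continuous g := by
    rw [continuous_iff_continuousAt]
    intro t
    rcases lt_trichotomy t 0 with h | h | h
    · refine (continuousAt_const (y := u₀)).congr ?_
      filter_upwards [gt_mem_nhds h] with s hs
      exact (if_pos hs.le).symm
    · subst h
      rw [continuousAt_iff_continuous_left'_right']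
      refine ⟨?_, ?_⟩
      · refine (continuousWithinAt_const (b := u₀)).congr (fun s hs => if_pos (le_of_lt hs)) hg0
      · unfold ContinuousWithinAt
        rw [hg0]
        refine (hS2 u₀).2.congr' ?_
        filter_upwards [self_mem_nhdsWithin] with s hs
        exact (hgpos s hs).symm
    · refine ((hS2 u₀).1.continuousAt (Ioi_mem_nhds h)).congr ?_
      filter_upwards [lt_mem_nhds h] with s hs
      exact (hgpos s hs).symm
  obtain ⟨M₀, hM₀⟩ := (isCompact_Icc (a := (0 : ℝ)) (b := 1)).exists_bound_of_continuousOn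
    hg.continuousOn
  set A := C * (‖L‖ * ((M₀ + 1) + (M₀ + 1) ^ 3 + (1 + 3 * (M₀ + 1) ^ 2)))
  have hlim : Tendsto (fun T : ℝ => A * (T ^ (1 - γ) / (1 - γ))) (𝓝[>] 0) (𝓝 0) := by
    have h1 : ContinuousAt (fun T : ℝ => A * (T ^ (1 - γ) / (1 - γ))) 0 :=
      continuousAt_const.mul
        ((Real.continuousAt_rpow_const 0 (1 - γ) (Or.inr (by linarith))).div_const _)
    have h2 := h1.tendsto
    simp only [Real.zero_rpow (show 1 - γ ≠ 0 by linarith), zero_div, mul_zero] at h2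
    exact h2.mono_left nhdsWithin_le_nhds
  obtain ⟨T, hTA, hT0, hT1⟩ :=
    ((hlim.eventually (gt_mem_nhds (show (0 : ℝ) < 1 / 2 by norm_num))).and
      (Ioc_mem_nhdsGT (show (0 : ℝ) < 1 by norm_num))).exists
  obtain ⟨u, huc, hue⟩ := exists_mild_solution hγ1 hS3 hS4 hC hT0 hT1 hg
    (M := M₀ + 1) (fun t ht => by linarith [hM₀ t ht]) hTA.le
  refine ⟨T, hT0, hT1, ⟨u, huc, ?_, fun t ht => ?_⟩, fun v w hv hw =>
    mild_solution_unique hγ1 hS3 hS4 hC hT0 hT1 hv hw⟩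
  · rw [hue 0 ⟨le_rfl, hT0.le⟩, hg0]
    simp
  · rw [hue t ⟨ht.1.le, ht.2⟩, hgpos t ht.1]
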